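/- Fix integers j, k ≥ 2 and let d = k if k is even and d = k − 1 if k is odd. For every real α with 0 < α < d/k, the growth rate of the degree-1 pseudoweight (i.e., codeword weight) distribution of the (j,k)-regular configuration-model LDPC ensemble equals G_1(α) = (j/k)·log[ ((1 + x_0)^k + (1 − x_0)^k)/2 ] − jα·log x_0 − (j−1)·h(α), where x_0 is the unique positive real solution of α·[(1 + x_0)^k + (1 − x_0)^k] = x_0·[(1 + x_0)^{k−1} − (1 − x_0)^{k−1}] and h(α) = −α log α − (1−α) log(1−α) is the binary entropy function. -/

import Mathlib

open Finset

/-- The variable node owning variable socket `s` (each of the `n` variable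
nodes has `j` sockets). -/
def varNode (n j : ℕ) (s : Fin (n * j)) : Fin n :=
  ⟨s.val / j, by
    rcases Nat.eq_zero_or_pos j with hj | hj
    · exact absurd s.isLt (by simp [hj])
    · exact (Nat.div_lt_iff_lt_mul hj).mpr s.isLt⟩

/-- The `i`-th socket of check node `c` (each of the `m = nj/k` check nodes has
`k` sockets), as an index among all `nj = mk` sockets. -/
def checkSocket (n j k : ℕ) (c : Fin (n * j / k)) (i : Fin k) : Fin (n * j) :=
  ⟨c.val * k + i.val, by
    have h1 : c.val * k + i.val < (c.val + 1) * k := by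
      rw [Nat.succ_mul]; exact Nat.add_lt_add_left i.isLt _
    have h2 : (c.val + 1) * k ≤ (n * j / k) * k := Nat.mul_le_mul_right k c.isLt
    have h3 : (n * j / k) * k ≤ n * j := Nat.div_mul_le_self _ _
    omega⟩

/-- `z : {1,…,n} → {0,1}` is a codeword (degree-1 pseudocodeword) of the
configuration given by the socket matching `σ`: every check node has an even
number of incident edges labelled `1`, each edge inheriting the label of its
variable node. -/
def IsCodeword (n j k : ℕ) (σ : Equiv.Perm (Fin (n * j)))
    (z : Fin n → Fin 2) : Prop :=
  ∀ c : Fin (n * j / k),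
    Even (∑ i : Fin k, (z (varNode n j (σ.symm (checkSocket n j k c i))) : ℕ))

/-- The number of codewords of weight `α n` of the configuration given by `σ`. -/
noncomputable def countWeight (n j k : ℕ) (σ : Equiv.Perm (Fin (n * j)))
    (α : ℝ) : ℕ :=
  Nat.card {z : Fin n → Fin 2 //
    IsCodeword n j k σ z ∧
      (((Finset.univ.filter fun i : Fin n => z i = 1).card : ℝ) = α * (n : ℝ))}

/-- The expected number, over a uniformly random matching `σ` of the `nj`
variable sockets to the `nj = mk` check sockets, of codewords of weight `α n`. -/
noncomputable def expectWeight (n j k : ℕ) (α : ℝ) : ℝ :=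
  (∑ σ : Equiv.Perm (Fin (n * j)), (countWeight n j k σ α : ℝ)) /
    (Nat.factorial (n * j) : ℝ)


open Polynomial in
/-- The weight enumerator of the even-weight code of length `k`. -/
noncomputable def evenWeightEnumerator (k : ℕ) : ℝ[X] :=
  ∑ T ∈ (univ : Finset (Finset (Fin k))).filter (fun T => Even T.card), Polynomial.X ^ T.card

theorem eval_evenWeightEnumerator (k : ℕ) (x : ℝ) :
    (evenWeightEnumerator k).eval x = ((1 + x) ^ k + (1 - x) ^ k) / 2 := by
  have key : ∀ y : ℝ, ∑ T : Finset (Fin k), y ^ T.card = (1 + y) ^ k := by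
    intro y
    have := Fintype.sum_pow_mul_eq_add_pow (Fin k) y 1
    simpa [add_comm] using this
  have h2 : (1 - x) ^ k = ∑ T : Finset (Fin k), (-x) ^ T.card := by rw [key, sub_eq_add_neg]
  rw [h2, ← key x, ← Finset.sum_add_distrib, Finset.sum_div, evenWeightEnumerator,
    Polynomial.eval_finsetSum, Finset.sum_filter]
  refine Finset.sum_congr rfl fun T _ => ?_
  split_ifs with h
  · simp [h.neg_pow]
  · simp [(Nat.not_even_iff_odd.mp h).neg_pow]

theorem eval_derivative_evenWeightEnumerator (k : ℕ) (x : ℝ) :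
    (Polynomial.derivative (evenWeightEnumerator k)).eval x =
      k * ((1 + x) ^ (k - 1) - (1 - x) ^ (k - 1)) / 2 := by
  have h : evenWeightEnumerator k = Polynomial.C (1 / 2) *
      ((1 + Polynomial.X) ^ k + (1 - Polynomial.X) ^ k) := by
    refine Polynomial.funext fun y => ?_
    rw [eval_evenWeightEnumerator]
    simp
    ring
  rw [h]
  simp [Polynomial.derivative_pow]
  ring

theorem coeff_pow_evenWeightEnumerator (k m t : ℕ) :
    ((evenWeightEnumerator k) ^ m).coeff t =
      (((Fintype.piFinset fun _ : Fin m =>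
        (univ : Finset (Finset (Fin k))).filter (fun T => Even T.card)).filter
          (fun φ => ∑ c, (φ c).card = t)).card : ℝ) := by
  have h : (evenWeightEnumerator k) ^ m = ∏ _c : Fin m, evenWeightEnumerator k := by simp
  rw [h]
  simp only [evenWeightEnumerator]
  rw [Finset.prod_univ_sum, Polynomial.finsetSum_coeff, Finset.card_filter]
  push_cast
  refine Finset.sum_congr rfl fun φ _ => ?_
  rw [Finset.prod_pow_eq_pow_sum, Polynomial.coeff_X_pow]
  simp [eq_comm]

theorem even_of_coeff_pow_evenWeightEnumerator_ne_zero {k m t : ℕ}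
    (h : ((evenWeightEnumerator k) ^ m).coeff t ≠ 0) : Even t := by
  rw [coeff_pow_evenWeightEnumerator, Nat.cast_ne_zero, Finset.card_ne_zero] at h
  obtain ⟨φ, hφ⟩ := h
  simp only [Finset.mem_filter, Fintype.mem_piFinset, Finset.mem_univ, true_and] at hφ
  rw [← hφ.2]
  exact Finset.even_sum _ fun c _ => hφ.1 c

theorem coeff_pow_evenWeightEnumerator_nonneg (k m t : ℕ) :
    0 ≤ ((evenWeightEnumerator k) ^ m).coeff t := by
  rw [coeff_pow_evenWeightEnumerator]
  positivity

theorem Polynomial.coeff_mul_coeff_le_coeff_mul {P Q : Polynomial ℝ} (hP : ∀ i, 0 ≤ P.coeff i)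
    (hQ : ∀ i, 0 ≤ Q.coeff i) (a b : ℕ) : P.coeff a * Q.coeff b ≤ (P * Q).coeff (a + b) := by
  rw [Polynomial.coeff_mul]
  exact Finset.single_le_sum (f := fun p : ℕ × ℕ => P.coeff p.1 * Q.coeff p.2)
    (fun p _ => mul_nonneg (hP _) (hQ _))
    (show (a, b) ∈ antidiagonal (a + b) by simp)

theorem one_le_coeff_evenWeightEnumerator {k i : ℕ} (hi : Even i) (hik : i ≤ k) :
    1 ≤ (evenWeightEnumerator k).coeff i := by
  obtain ⟨T, -, hT⟩ := Finset.exists_subset_card_eq (s := (univ : Finset (Fin k))) (n := i)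
    (by simpa using hik)
  rw [evenWeightEnumerator, Polynomial.finsetSum_coeff]
  have : (1 : ℝ) = (Polynomial.X ^ T.card : Polynomial ℝ).coeff i := by simp [hT]
  rw [this]
  refine Finset.single_le_sum (f := fun T : Finset (Fin k) =>
    (Polynomial.X ^ T.card : Polynomial ℝ).coeff i) (fun S _ => ?_) ?_
  · simp only [Polynomial.coeff_X_pow]
    split_ifs <;> norm_num
  · simp [hT, hi]

theorem one_le_coeff_pow_evenWeightEnumerator {k d : ℕ} (hd : Even d) (hdk : d ≤ k) (m : ℕ) :
    ∀ s : ℕ, Even s → s ≤ d * m → 1 ≤ ((evenWeightEnumerator k) ^ m).coeff s := by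
  induction m with
  | zero =>
    intro s _ hs
    obtain rfl : s = 0 := by omega
    simp
  | succ m ih =>
    intro s hs hsd
    have hmin : Even (min s d) := by rcases min_choice s d with h | h <;> rw [h] <;> assumption
    have h1 := ih (s - min s d) (hs.tsub hmin) (by rw [mul_add] at hsd; omega)
    have h2 := one_le_coeff_evenWeightEnumerator hmin ((min_le_right s d).trans hdk)
    have h3 := Polynomial.coeff_mul_coeff_le_coeff_mul
      (coeff_pow_evenWeightEnumerator_nonneg k m)
      (by simpa using coeff_pow_evenWeightEnumerator_nonneg k 1) (s - min s d) (min s d)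
    rw [← pow_succ, Nat.sub_add_cancel (min_le_left s d)] at h3
    exact (one_le_mul_of_one_le_of_one_le h1 h2).trans h3

theorem Polynomial.coeff_mul_pow_le_eval {P : Polynomial ℝ} (hP : ∀ i, 0 ≤ P.coeff i) {x : ℝ}
    (hx : 0 ≤ x) (t : ℕ) : P.coeff t * x ^ t ≤ P.eval x := by
  rw [Polynomial.eval_eq_sum_range' (n := max (P.natDegree + 1) (t + 1)) (by omega)]
  exact Finset.single_le_sum (f := fun i => P.coeff i * x ^ i)
    (fun i _ => mul_nonneg (hP i) (pow_nonneg hx i)) (by simp)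

/-- The first and second moments of the coefficients of `P ^ m` weighted by powers of `x`. -/
theorem Polynomial.eval_pow_moments (P : Polynomial ℝ) {x μ B : ℝ}
    (h1 : x * P.derivative.eval x = μ * P.eval x)
    (h2 : x * (Polynomial.X * P.derivative).derivative.eval x = (μ ^ 2 + B) * P.eval x) (m : ℕ) :
    x * (P ^ m).derivative.eval x = m * μ * (P ^ m).eval x ∧
    x * (Polynomial.X * (P ^ m).derivative).derivative.eval x =
      ((m * μ) ^ 2 + m * B) * (P ^ m).eval x := by
  induction m with
  | zero => simp
  | succ m ih =>
    obtain ⟨i1, i2⟩ := ih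
    simp only [Polynomial.derivative_mul, Polynomial.derivative_X, one_mul, Polynomial.eval_add,
      Polynomial.eval_mul, Polynomial.eval_X] at h2 i2
    rw [pow_succ]
    generalize P ^ m = Q at *
    constructor
    · simp only [Polynomial.derivative_mul, Polynomial.eval_add, Polynomial.eval_mul]
      push_cast
      linear_combination P.eval x * i1 + Q.eval x * h1
    · simp only [Polynomial.derivative_mul, Polynomial.derivative_add, Polynomial.derivative_X,
        one_mul, Polynomial.eval_add, Polynomial.eval_mul, Polynomial.eval_X]
      push_cast
      linear_combination P.eval x * i2 + Q.eval x * h2 +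
        2 * x * P.derivative.eval x * i1 + 2 * m * μ * Q.eval x * h1

theorem Polynomial.sum_coeff_mul_sub_sq (Q : Polynomial ℝ) (x c : ℝ) :
    ∑ t ∈ range (Q.natDegree + 1), Q.coeff t * x ^ t * ((t : ℝ) - c) ^ 2 =
      x * (Polynomial.X * Q.derivative).derivative.eval x -
        2 * c * (x * Q.derivative.eval x) + c ^ 2 * Q.eval x := by
  have e1 : ∀ R : Polynomial ℝ, (Polynomial.X * R.derivative).natDegree ≤ R.natDegree := by
    intro R
    refine Polynomial.natDegree_le_iff_coeff_eq_zero.mpr fun N hN => ?_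
    obtain ⟨N, rfl⟩ : ∃ M, N = M + 1 := ⟨N - 1, by omega⟩
    rw [Polynomial.coeff_X_mul, Polynomial.coeff_derivative,
      Polynomial.coeff_eq_zero_of_natDegree_lt hN, zero_mul]
  have e2 : ∀ (R : Polynomial ℝ) (t : ℕ),
      (Polynomial.X * R.derivative).coeff t = t * R.coeff t := by
    intro R t
    cases t with
    | zero => simp
    | succ t =>
      rw [Polynomial.coeff_X_mul, Polynomial.coeff_derivative]
      push_cast
      ring
  have e3 : ∀ R : Polynomial ℝ, R.natDegree < Q.natDegree + 1 →
      x * R.derivative.eval x = ∑ t ∈ range (Q.natDegree + 1), t * R.coeff t * x ^ t := by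
    intro R hR
    have : x * R.derivative.eval x = (Polynomial.X * R.derivative).eval x := by simp
    rw [this, Polynomial.eval_eq_sum_range' ((e1 R).trans_lt hR)]
    simp only [e2]
  rw [e3 Q (by omega), e3 _ ((e1 Q).trans_lt (by omega)), Polynomial.eval_eq_sum_range,
    Finset.mul_sum, Finset.mul_sum, ← Finset.sum_sub_distrib, ← Finset.sum_add_distrib]
  refine Finset.sum_congr rfl fun t _ => ?_
  rw [e2]
  ring

/-- The Chebyshev inequality for the coefficients of `P ^ m`, combined with the pigeonhole
principle. -/
theorem Polynomial.exists_large_coeff_pow (P : Polynomial ℝ) {x μ B : ℝ}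
    (hx : 0 < x) (hP0 : 0 < P.eval x) (m : ℕ) (hP : ∀ i, 0 ≤ (P ^ m).coeff i)
    (h1 : x * P.derivative.eval x = μ * P.eval x)
    (h2 : x * (Polynomial.X * P.derivative).derivative.eval x = (μ ^ 2 + B) * P.eval x)
    {R : ℝ} (hR : 0 < R) (hmR : 2 * (m * B) ≤ R ^ 2) :
    ∃ t : ℕ, |(t : ℝ) - m * μ| ≤ R ∧
      (P.eval x) ^ m ≤ 2 * ((P ^ m).natDegree + 1) * ((P ^ m).coeff t * x ^ t) := by
  obtain ⟨m1, m2⟩ := P.eval_pow_moments h1 h2 m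
  have hsum := (P ^ m).sum_coeff_mul_sub_sq x (m * μ)
  rw [m1, m2, Polynomial.eval_pow] at hsum
  have hF : 0 < P.eval x ^ m := pow_pos hP0 m
  have hsum0 : P.eval x ^ m = ∑ t ∈ range ((P ^ m).natDegree + 1), (P ^ m).coeff t * x ^ t := by
    rw [← Polynomial.eval_pow, Polynomial.eval_eq_sum_range]
  set F := P.eval x ^ m
  set Q := P ^ m
  by_contra! hcon
  have hN : (0 : ℝ) < Q.natDegree + 1 := by positivity
  have hterm : ∀ t ∈ range (Q.natDegree + 1), 2 * (Q.coeff t * x ^ t) <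
      F / (Q.natDegree + 1) + 2 / R ^ 2 * (Q.coeff t * x ^ t * ((t : ℝ) - m * μ) ^ 2) := by
    intro t _
    have ha : 0 ≤ Q.coeff t * x ^ t := mul_nonneg (hP t) (pow_pos hx t).le
    by_cases ht : |(t : ℝ) - m * μ| ≤ R
    · have h3 : 2 * (Q.coeff t * x ^ t) < F / (Q.natDegree + 1) := by
        rw [lt_div_iff₀ hN]
        linarith [hcon t ht]
      have h4 : 0 ≤ 2 / R ^ 2 * (Q.coeff t * x ^ t * ((t : ℝ) - m * μ) ^ 2) := by positivity
      linarith
    · have h3 : R ^ 2 ≤ ((t : ℝ) - m * μ) ^ 2 := by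
        rw [← sq_abs ((t : ℝ) - m * μ)]
        exact pow_le_pow_left₀ hR.le (not_le.mp ht).le 2
      have h4 : 0 < F / (Q.natDegree + 1) := by positivity
      have h5 : 2 * (Q.coeff t * x ^ t) = 2 / R ^ 2 * (Q.coeff t * x ^ t * R ^ 2) := by
        field_simp
      have h6 : 2 / R ^ 2 * (Q.coeff t * x ^ t * R ^ 2) ≤
          2 / R ^ 2 * (Q.coeff t * x ^ t * ((t : ℝ) - m * μ) ^ 2) := by gcongr
      linarith
  have hlt := Finset.sum_lt_sum_of_nonempty (by simp) hterm
  rw [← Finset.mul_sum, ← hsum0, Finset.sum_add_distrib, ← Finset.mul_sum, hsum,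
    Finset.sum_const, Finset.card_range, nsmul_eq_mul] at hlt
  push_cast at hlt
  rw [mul_div_cancel₀ _ hN.ne'] at hlt
  have h7 : 2 / R ^ 2 * (((m * μ) ^ 2 + m * B) * F - 2 * (m * μ) * (m * μ * F) +
      (m * μ) ^ 2 * F) = 2 * (m * B) / R ^ 2 * F := by ring
  have h8 : 2 * (m * B) / R ^ 2 ≤ 1 := (div_le_one (by positivity)).mpr hmR
  rw [h7] at hlt
  nlinarith

theorem Equiv.Perm.card_filter_map_finset {β : Type*} [Fintype β] [DecidableEq β] (S : Finset β)
    (p : Finset β → Prop) [DecidablePred p] :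
    ((univ : Finset (Equiv.Perm β)).filter fun σ => p (S.map σ.toEmbedding)).card *
        (Fintype.card β).choose S.card =
      ((powersetCard S.card (univ : Finset β)).filter p).card * (Fintype.card β).factorial := by
  have hfib : ∀ T ∈ powersetCard S.card (univ : Finset β),
      ((univ : Finset (Equiv.Perm β)).filter fun σ => S.map σ.toEmbedding = T).card =
        ((univ : Finset (Equiv.Perm β)).filter fun σ => S.map σ.toEmbedding = S).card := by
    intro T hT
    obtain ⟨τ, hτ⟩ := Equiv.Perm.exists_map_finset_eq S T (Finset.mem_powersetCard.mp hT).2.symm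
    have hmul : ∀ σ : Equiv.Perm β, S.map (Equiv.mulLeft τ σ).toEmbedding =
        (S.map σ.toEmbedding).map τ.toEmbedding := by
      intro σ
      rw [Finset.map_map]
      rfl
    refine (Finset.card_equiv (Equiv.mulLeft τ) fun σ => ?_).symm
    simp only [Finset.mem_filter, Finset.mem_univ, true_and]
    rw [hmul, ← hτ, Finset.map_inj]
  have key : ∀ q : Finset β → Prop, ∀ [DecidablePred q],
      ((univ : Finset (Equiv.Perm β)).filter fun σ => q (S.map σ.toEmbedding)).card =
        ((powersetCard S.card (univ : Finset β)).filter q).card *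
          ((univ : Finset (Equiv.Perm β)).filter fun σ => S.map σ.toEmbedding = S).card := by
    intro q _
    rw [Finset.card_eq_sum_card_fiberwise (f := fun σ : Equiv.Perm β => S.map σ.toEmbedding)
      (t := (powersetCard S.card (univ : Finset β)).filter q)]
    · rw [← smul_eq_mul, ← Finset.sum_const]
      refine Finset.sum_congr rfl fun T hT => ?_
      rw [Finset.mem_filter] at hT
      rw [← hfib T hT.1, Finset.filter_filter]
      congr 1
      refine Finset.filter_congr fun σ _ => ?_
      constructor
      · exact fun h => h.2
      · exact fun h => ⟨h ▸ hT.2, h⟩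
    · intro σ hσ
      have hσ' := (Finset.mem_filter.mp (Finset.mem_coe.mp hσ)).2
      simpa using hσ'
  have htot := key fun _ => True
  simp only [Finset.filter_true, Finset.card_powersetCard, Finset.card_univ,
    Fintype.card_perm] at htot
  rw [key p, htot]
  ring

theorem checkSocket_bijective {n j k : ℕ} (hk : 0 < k) (hdvd : k ∣ n * j) :
    Function.Bijective fun p : Fin (n * j / k) × Fin k => checkSocket n j k p.1 p.2 := by
  rw [Fintype.bijective_iff_injective_and_card]
  constructor
  · rintro ⟨c, i⟩ ⟨c', i'⟩ h
    have h' : c.val * k + i.val = c'.val * k + i'.val := congrArg Fin.val h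
    have hc : c.val = c'.val := by
      have := congrArg (· / k) h'
      simpa [Nat.mul_comm _ k, Nat.mul_add_div hk, Nat.div_eq_of_lt i.isLt,
        Nat.div_eq_of_lt i'.isLt] using this
    rw [hc] at h'
    exact Prod.ext (Fin.ext hc) (Fin.ext (by simpa using h'))
  · simp [Nat.div_mul_cancel hdvd]

theorem card_eq_sum_card_checkSocket {n j k : ℕ} (hk : 0 < k) (hdvd : k ∣ n * j)
    (T : Finset (Fin (n * j))) :
    T.card = ∑ c, (univ.filter fun i => checkSocket n j k c i ∈ T).card := by
  simp only [Finset.card_filter]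
  rw [← Fintype.sum_prod_type' (f := fun c i => if checkSocket n j k c i ∈ T then 1 else 0),
    (checkSocket_bijective hk hdvd).sum_comp fun s => if s ∈ T then 1 else 0]
  simp

/-- The sets of check sockets meeting every check node in an even number of sockets are counted
by the coefficients of a power of the even-weight enumerator. -/
theorem card_even_socket_sets {n j k : ℕ} (hk : 0 < k) (hdvd : k ∣ n * j) (t : ℕ) :
    (((powersetCard t (univ : Finset (Fin (n * j)))).filter fun T =>
        ∀ c, Even (univ.filter fun i => checkSocket n j k c i ∈ T).card).card : ℝ) =
      ((evenWeightEnumerator k) ^ (n * j / k)).coeff t := by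
  rw [coeff_pow_evenWeightEnumerator, Nat.cast_inj]
  have hbij := checkSocket_bijective hk hdvd
  refine Finset.card_bij (fun T _ c => univ.filter fun i => checkSocket n j k c i ∈ T) ?_ ?_ ?_
  · intro T hT
    simp only [Finset.mem_filter, Finset.mem_powersetCard, Finset.subset_univ, true_and] at hT
    simp only [Finset.mem_filter, Fintype.mem_piFinset, Finset.mem_univ, true_and]
    exact ⟨hT.2, (card_eq_sum_card_checkSocket hk hdvd T).symm.trans hT.1⟩
  · intro T _ T' _ h
    ext s
    obtain ⟨⟨c, i⟩, rfl⟩ := hbij.2 s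
    simpa using Finset.ext_iff.mp (congrFun h c) i
  · intro φ hφ
    simp only [Finset.mem_filter, Fintype.mem_piFinset, Finset.mem_univ, true_and] at hφ
    let e := Equiv.ofBijective _ hbij
    let T : Finset (Fin (n * j)) := univ.filter fun s => (e.symm s).2 ∈ φ (e.symm s).1
    have hT : (fun c => univ.filter fun i => checkSocket n j k c i ∈ T) = φ := by
      funext c
      ext i
      have : e.symm (checkSocket n j k c i) = (c, i) := e.symm_apply_apply (c, i)
      simp [T, this]
    refine ⟨T, ?_, hT⟩
    simp only [Finset.mem_filter, Finset.mem_powersetCard, Finset.subset_univ, true_and]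
    refine ⟨?_, fun c => ?_⟩
    · rw [card_eq_sum_card_checkSocket hk hdvd T, ← hφ.2]
      exact Finset.sum_congr rfl fun c _ => congrArg Finset.card (congrFun hT c)
    · rw [congrFun hT c]
      exact hφ.1 c

theorem card_filter_varNode (n j : ℕ) (z : Fin n → Fin 2) :
    (univ.filter fun s => z (varNode n j s) = 1).card =
      j * (univ.filter fun i => z i = 1).card := by
  have h : (univ.filter fun s => z (varNode n j s) = 1).card =
      ((univ.filter fun i => z i = 1) ×ˢ (univ : Finset (Fin j))).card := by
    refine Finset.card_equiv finProdFinEquiv.symm fun s => ?_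
    simp only [Finset.mem_filter, Finset.mem_univ, true_and, Finset.mem_product, and_true]
    rfl
  rw [h, Finset.card_product, Finset.card_univ, Fintype.card_fin, mul_comm]

theorem isCodeword_iff (n j k : ℕ) (σ : Equiv.Perm (Fin (n * j))) (z : Fin n → Fin 2) :
    IsCodeword n j k σ z ↔ ∀ c, Even (univ.filter fun i => checkSocket n j k c i ∈
      (univ.filter fun s => z (varNode n j s) = 1).map σ.toEmbedding).card := by
  refine forall_congr' fun c => ?_
  rw [Finset.card_filter]
  have : ∀ a : Fin 2, (a : ℕ) = if a = 1 then 1 else 0 := by decide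
  simp [this]

theorem card_filter_weight (n w : ℕ) :
    ((univ : Finset (Fin n → Fin 2)).filter fun z =>
      (univ.filter fun i => z i = 1).card = w).card = n.choose w := by
  have h : n.choose w = (powersetCard w (univ : Finset (Fin n))).card := by simp
  rw [h]
  refine Finset.card_bij (fun z _ => univ.filter fun i => z i = 1) ?_ ?_ ?_
  · intro z hz
    simpa using hz
  · intro z _ z' _ h
    funext i
    have := Finset.ext_iff.mp h i
    simp only [Finset.mem_filter, Finset.mem_univ, true_and] at this
    omega
  · intro T hT
    refine ⟨fun i => if i ∈ T then 1 else 0, ?_, ?_⟩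
    · simpa using hT
    · simp

/-- The exact expected weight enumerator of the configuration-model ensemble. -/
theorem expectWeight_eq {n j k w : ℕ} (hk : 0 < k) (hdvd : k ∣ n * j) {α : ℝ}
    (hw : (w : ℝ) = α * n) (hwn : w ≤ n) :
    expectWeight n j k α = n.choose w * ((evenWeightEnumerator k) ^ (n * j / k)).coeff (j * w) /
      (n * j).choose (j * w) := by
  classical
  have hcount : ∀ σ : Equiv.Perm (Fin (n * j)), countWeight n j k σ α =
      (((univ : Finset (Fin n → Fin 2)).filter fun z =>
        (univ.filter fun i => z i = 1).card = w).filter fun z => IsCodeword n j k σ z).card := by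
    intro σ
    rw [countWeight, Nat.card_eq_fintype_card, Fintype.card_subtype, Finset.filter_filter]
    congr 1
    refine Finset.filter_congr fun z _ => ?_
    rw [← hw, Nat.cast_inj, and_comm]
  have hsum : ∑ σ : Equiv.Perm (Fin (n * j)), countWeight n j k σ α =
      ∑ z ∈ (univ : Finset (Fin n → Fin 2)).filter fun z =>
        (univ.filter fun i => z i = 1).card = w,
        ((univ : Finset (Equiv.Perm (Fin (n * j)))).filter fun σ => IsCodeword n j k σ z).card := by
    simp only [hcount, Finset.card_filter _ (univ.filter _), Finset.card_filter _ univ]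
    exact Finset.sum_comm
  have hC : ((n * j).choose (j * w) : ℝ) ≠ 0 := by
    have : j * w ≤ n * j := by rw [mul_comm n j]; exact Nat.mul_le_mul_left j hwn
    exact_mod_cast (Nat.choose_pos this).ne'
  have hF : ((n * j).factorial : ℝ) ≠ 0 := by exact_mod_cast (n * j).factorial_ne_zero
  have hz : ∀ z ∈ (univ : Finset (Fin n → Fin 2)).filter fun z =>
        (univ.filter fun i => z i = 1).card = w,
      (((univ : Finset (Equiv.Perm (Fin (n * j)))).filter fun σ =>
        IsCodeword n j k σ z).card : ℝ) =
      ((evenWeightEnumerator k) ^ (n * j / k)).coeff (j * w) * (n * j).factorial /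
        (n * j).choose (j * w) := by
    intro z hz
    have hp := Equiv.Perm.card_filter_map_finset (univ.filter fun s => z (varNode n j s) = 1)
      fun T => ∀ c, Even (univ.filter fun i => checkSocket n j k c i ∈ T).card
    simp only [← isCodeword_iff] at hp
    rw [card_filter_varNode, (Finset.mem_filter.mp hz).2, Fintype.card_fin] at hp
    rw [eq_div_iff hC, ← card_even_socket_sets hk hdvd]
    exact_mod_cast hp
  rw [expectWeight, ← Nat.cast_sum, hsum, Nat.cast_sum, Finset.sum_congr rfl hz,
    Finset.sum_const, card_filter_weight, nsmul_eq_mul]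
  field_simp

theorem natDegree_evenWeightEnumerator_le (k : ℕ) : (evenWeightEnumerator k).natDegree ≤ k := by
  refine Polynomial.natDegree_sum_le_of_forall_le _ _ fun T _ => ?_
  simpa using T.card_le_univ

/-- A quantitative lower bound for the coefficients of powers of the even-weight enumerator:
all but `q` of the factors are treated by concentration, the others correct the degree. -/
theorem log_coeff_pow_evenWeightEnumerator_ge {k d : ℕ} (hd : Even d) (hdk : d ≤ k)
    {x μ B δ : ℝ} (hx : 0 < x) (hf : 0 < (evenWeightEnumerator k).eval x)
    (h1 : x * (evenWeightEnumerator k).derivative.eval x = μ * (evenWeightEnumerator k).eval x)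
    (h2 : x * (Polynomial.X * (evenWeightEnumerator k).derivative).derivative.eval x =
      (μ ^ 2 + B) * (evenWeightEnumerator k).eval x)
    (hδ : 0 < δ) (hδμ : δ ≤ μ) (hδd : δ ≤ d - μ) {m q t : ℕ} (hq : 0 < q) (hqm : q ≤ m)
    (hB : 2 * (m * |B|) ≤ (δ * q) ^ 2) (ht : Even t) (htm : (t : ℝ) = m * μ) :
    m * Real.log ((evenWeightEnumerator k).eval x) - t * Real.log x -
      q * (|Real.log ((evenWeightEnumerator k).eval x)| + k * |Real.log x|) -
      Real.log (2 * (k * m + 1)) ≤ Real.log (((evenWeightEnumerator k) ^ m).coeff t) := by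
  have hq' : (0 : ℝ) < q := by exact_mod_cast hq
  have hcast : ((m - q : ℕ) : ℝ) = m - q := Nat.cast_sub hqm
  have hmB : 2 * (((m - q : ℕ) : ℝ) * B) ≤ (δ * q) ^ 2 := by
    have : ((m - q : ℕ) : ℝ) * B ≤ m * |B| := by
      refine (mul_le_mul_of_nonneg_left (le_abs_self B) (Nat.cast_nonneg _)).trans ?_
      refine mul_le_mul_of_nonneg_right ?_ (abs_nonneg B)
      rw [hcast]
      linarith
    linarith
  obtain ⟨t', ht', hlarge⟩ := (evenWeightEnumerator k).exists_large_coeff_pow hx hf (m - q)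
    (coeff_pow_evenWeightEnumerator_nonneg k (m - q)) h1 h2 (mul_pos hδ hq') hmB
  have hF := pow_pos hf (m - q)
  have hne : ((evenWeightEnumerator k) ^ (m - q)).coeff t' ≠ 0 := by
    intro h
    rw [h, zero_mul, mul_zero] at hlarge
    linarith
  have hpos := lt_of_le_of_ne (coeff_pow_evenWeightEnumerator_nonneg k (m - q) t') hne.symm
  rw [hcast, abs_le] at ht'
  have hlo : (t' : ℝ) ≤ t := by nlinarith
  have hhi : (t : ℝ) - t' ≤ d * q := by nlinarith
  obtain ⟨s, rfl⟩ : ∃ s, t = t' + s := Nat.exists_eq_add_of_le (by exact_mod_cast hlo)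
  push_cast at hhi htm ⊢
  have hs : Even s := (Nat.even_add.mp ht).mp (even_of_coeff_pow_evenWeightEnumerator_ne_zero hne)
  have hsd : (s : ℝ) ≤ d * q := by linarith
  have hone := one_le_coeff_pow_evenWeightEnumerator hd hdk q s hs (by exact_mod_cast hsd)
  have hmul := Polynomial.coeff_mul_coeff_le_coeff_mul
    (coeff_pow_evenWeightEnumerator_nonneg k (m - q))
    (coeff_pow_evenWeightEnumerator_nonneg k q) t' s
  rw [← pow_add, Nat.sub_add_cancel hqm] at hmul
  have hle : Real.log (((evenWeightEnumerator k) ^ (m - q)).coeff t') ≤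
      Real.log (((evenWeightEnumerator k) ^ m).coeff (t' + s)) :=
    Real.log_le_log hpos ((le_mul_of_one_le_right hpos.le hone).trans hmul)
  have hdeg : (((evenWeightEnumerator k) ^ (m - q)).natDegree : ℝ) ≤ k * m := by
    have : ((evenWeightEnumerator k) ^ (m - q)).natDegree ≤ k * m := by
      refine Polynomial.natDegree_pow_le.trans ?_
      rw [mul_comm k m]
      exact Nat.mul_le_mul (Nat.sub_le m q) (natDegree_evenWeightEnumerator_le k)
    exact_mod_cast this
  have hlarge' : (evenWeightEnumerator k).eval x ^ (m - q) ≤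
      2 * (k * m + 1) * (((evenWeightEnumerator k) ^ (m - q)).coeff t' * x ^ t') :=
    hlarge.trans (by gcongr)
  have hlog := Real.log_le_log hF hlarge'
  rw [Real.log_mul (by positivity) (by positivity), Real.log_mul hne (by positivity),
    Real.log_pow, Real.log_pow, hcast] at hlog
  have hqf := mul_le_mul_of_nonneg_left
    (le_abs_self (Real.log ((evenWeightEnumerator k).eval x))) hq'.le
  have hdk' : (d : ℝ) ≤ k := by exact_mod_cast hdk
  have hsx : -(q * (k * |Real.log x|)) ≤ s * Real.log x := by
    have e1 : (s : ℝ) * -|Real.log x| ≤ s * Real.log x :=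
      mul_le_mul_of_nonneg_left (neg_abs_le _) (Nat.cast_nonneg s)
    have e2 : (s : ℝ) * |Real.log x| ≤ k * q * |Real.log x| :=
      mul_le_mul_of_nonneg_right (hsd.trans (by gcongr)) (abs_nonneg _)
    linarith
  linarith

open Filter in
theorem eventually_log_coeff_pow_evenWeightEnumerator_ge {k d : ℕ} (hd : Even d) (hdk : d ≤ k)
    {x μ : ℝ} (hx : 0 < x) (hf : 0 < (evenWeightEnumerator k).eval x)
    (h1 : x * (evenWeightEnumerator k).derivative.eval x = μ * (evenWeightEnumerator k).eval x)
    (hμ : 0 < μ) (hμd : μ < d) {ε : ℝ} (hε : 0 < ε) :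
    ∀ᶠ m : ℕ in atTop, ∀ t : ℕ, Even t → (t : ℝ) = m * μ →
      m * Real.log ((evenWeightEnumerator k).eval x) - t * Real.log x - ε * m ≤
        Real.log (((evenWeightEnumerator k) ^ m).coeff t) := by
  set f := (evenWeightEnumerator k).eval x with hfdef
  obtain ⟨B, h2⟩ : ∃ B, x * (Polynomial.X *
      (evenWeightEnumerator k).derivative).derivative.eval x = (μ ^ 2 + B) * f :=
    ⟨x * (Polynomial.X * (evenWeightEnumerator k).derivative).derivative.eval x / f - μ ^ 2, by
      field_simp; ring⟩
  set c := |Real.log f| + k * |Real.log x| with hc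
  have hc0 : 0 ≤ c := by positivity
  obtain ⟨δ, hδ, hδμ, hδd⟩ : ∃ δ : ℝ, 0 < δ ∧ δ ≤ μ ∧ δ ≤ d - μ :=
    ⟨min μ (d - μ), lt_min hμ (by linarith), min_le_left _ _, min_le_right _ _⟩
  obtain ⟨η, hη, hη1, hηε⟩ : ∃ η : ℝ, 0 < η ∧ η ≤ 1 ∧ η * c ≤ ε / 2 := by
    refine ⟨min 1 (ε / (2 * (c + 1))), by positivity, min_le_left _ _, ?_⟩
    calc min 1 (ε / (2 * (c + 1))) * c ≤ ε / (2 * (c + 1)) * c :=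
          mul_le_mul_of_nonneg_right (min_le_right _ _) hc0
      _ ≤ ε / (2 * (c + 1)) * (c + 1) := by gcongr; linarith
      _ = ε / 2 := by field_simp
  have hlog : ∀ᶠ m : ℕ in atTop, Real.log (2 * (k * m + 1)) ≤ ε / 2 * m := by
    have hlim : Tendsto (fun m : ℕ => 2 * (((k + 1 : ℕ) : ℝ) * m)) atTop atTop :=
      (tendsto_natCast_atTop_atTop.const_mul_atTop (by positivity)).const_mul_atTop (by norm_num)
    have ho := (Real.isLittleO_log_id_atTop.comp_tendsto hlim).bound
      (show 0 < ε / (4 * (k + 1)) by positivity)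
    filter_upwards [ho, eventually_ge_atTop 1] with m hm hm1
    have hm1' : (1 : ℝ) ≤ m := by exact_mod_cast hm1
    have hle : Real.log (2 * (k * m + 1)) ≤ Real.log (2 * (((k + 1 : ℕ) : ℝ) * m)) := by
      refine Real.log_le_log (by positivity) ?_
      push_cast
      linarith
    refine hle.trans ((le_abs_self _).trans ?_)
    simp only [Function.comp_apply, id_eq, Real.norm_eq_abs] at hm
    refine hm.trans (le_of_eq ?_)
    rw [abs_of_pos (by positivity)]
    push_cast
    field_simp
    ring
  have hlarge : ∀ a : ℝ, ∀ᶠ m : ℕ in atTop, a ≤ m := fun a =>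
    tendsto_natCast_atTop_atTop.eventually_ge_atTop a
  filter_upwards [hlog, hlarge (2 / η), hlarge (8 * |B| / (δ * η) ^ 2)] with m hm1 hm2 hm3 t ht htm
  have hηm : 2 ≤ η * m := by rw [div_le_iff₀ hη] at hm2; linarith
  have hqle : (⌊η * m⌋₊ : ℝ) ≤ η * m := Nat.floor_le (by linarith)
  have hqge : η * m / 2 ≤ (⌊η * m⌋₊ : ℝ) := by linarith [Nat.lt_floor_add_one (η * (m : ℝ))]
  have hq0 : 0 < ⌊η * (m : ℝ)⌋₊ := Nat.floor_pos.mpr (by linarith)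
  have hqm : ⌊η * (m : ℝ)⌋₊ ≤ m := by
    have : (⌊η * m⌋₊ : ℝ) ≤ m :=
      hqle.trans (mul_le_of_le_one_left (Nat.cast_nonneg m) hη1)
    exact_mod_cast this
  have hB : 2 * (m * |B|) ≤ (δ * (⌊η * (m : ℝ)⌋₊ : ℝ)) ^ 2 := by
    rw [div_le_iff₀ (by positivity)] at hm3
    calc 2 * (m * |B|) = m / 4 * (8 * |B|) := by ring
      _ ≤ m / 4 * (m * (δ * η) ^ 2) := by gcongr
      _ = (δ * (η * m / 2)) ^ 2 := by ring
      _ ≤ _ := by gcongr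
  have key := log_coeff_pow_evenWeightEnumerator_ge hd hdk hx hf h1 h2 hδ hδμ hδd hq0 hqm hB ht htm
  rw [← hfdef, ← hc] at key
  have hqc : (⌊η * m⌋₊ : ℝ) * c ≤ ε / 2 * m := by
    calc (⌊η * m⌋₊ : ℝ) * c ≤ η * m * c := by gcongr
      _ = η * c * m := by ring
      _ ≤ ε / 2 * m := by gcongr
  linarith

open Filter in
/-- The exponential growth rate of the coefficients of powers of the even-weight enumerator. -/
theorem tendsto_log_coeff_pow_evenWeightEnumerator {ι : Type*} {l : Filter ι} {k d : ℕ}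
    (hd : Even d) (hdk : d ≤ k) {x μ : ℝ} (hx : 0 < x)
    (hf : 0 < (evenWeightEnumerator k).eval x)
    (h1 : x * (evenWeightEnumerator k).derivative.eval x = μ * (evenWeightEnumerator k).eval x)
    (hμ : 0 < μ) (hμd : μ < d) {m t : ι → ℕ} (hm : Tendsto m l atTop)
    (htm : ∀ᶠ i in l, (t i : ℝ) = m i * μ)
    (hne : ∀ᶠ i in l, ((evenWeightEnumerator k) ^ m i).coeff (t i) ≠ 0) :
    Tendsto (fun i => Real.log (((evenWeightEnumerator k) ^ m i).coeff (t i)) / m i) l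
      (nhds (Real.log ((evenWeightEnumerator k).eval x) - μ * Real.log x)) := by
  rw [Metric.tendsto_nhds]
  intro ε hε
  filter_upwards [hm.eventually (eventually_log_coeff_pow_evenWeightEnumerator_ge hd hdk hx hf h1
    hμ hμd (half_pos hε)), hm.eventually_gt_atTop 0, htm, hne] with i hlow hm0 ht hi
  have hm0' : (0 : ℝ) < m i := by exact_mod_cast hm0
  have hlow' := hlow (t i) (even_of_coeff_pow_evenWeightEnumerator_ne_zero hi) ht
  have hpos := lt_of_le_of_ne (coeff_pow_evenWeightEnumerator_nonneg k (m i) (t i)) hi.symm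
  have hup := Real.log_le_log (by positivity) (Polynomial.coeff_mul_pow_le_eval
    (coeff_pow_evenWeightEnumerator_nonneg k (m i)) hx.le (t i))
  rw [Real.log_mul hi (by positivity), Real.log_pow, Polynomial.eval_pow, Real.log_pow] at hup
  rw [Real.dist_eq, abs_lt]
  rw [ht] at hup hlow'
  constructor
  · rw [lt_sub_iff_add_lt, lt_div_iff₀ hm0']
    nlinarith
  · rw [sub_lt_iff_lt_add, div_lt_iff₀ hm0']
    nlinarith

open Filter in
theorem tendsto_log_factorial_sub_div :
    Tendsto (fun n : ℕ => (Real.log n.factorial - n * Real.log n + n) / n) atTop (nhds 0) := by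
  have hs : Tendsto (fun n : ℕ => Real.log (Stirling.stirlingSeq n)) atTop
      (nhds (Real.log √Real.pi)) :=
    Stirling.tendsto_stirlingSeq_sqrt_pi.log (by positivity)
  have h1 := hs.div_atTop tendsto_natCast_atTop_atTop
  have hlim : Tendsto (fun n : ℕ => 2 * (n : ℝ)) atTop atTop :=
    tendsto_natCast_atTop_atTop.const_mul_atTop (by norm_num)
  have h2 := (Real.isLittleO_log_id_atTop.tendsto_div_nhds_zero).comp hlim
  have h3 := h1.add h2
  rw [add_zero] at h3
  refine h3.congr' ?_
  filter_upwards [eventually_gt_atTop 0] with n hn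
  have hn' : (0 : ℝ) < n := by exact_mod_cast hn
  simp only [Function.comp_apply, id_eq]
  rw [Stirling.log_stirlingSeq_formula, Real.log_div hn'.ne' (Real.exp_pos 1).ne', Real.log_exp]
  field_simp
  ring

open Filter in
/-- The exponential growth rate of binomial coefficients is the binary entropy function. -/
theorem tendsto_log_choose_div {ι : Type*} {l : Filter ι} {N W : ι → ℕ} {α : ℝ}
    (hN : Tendsto N l atTop) (hα0 : 0 < α) (hα1 : α < 1)
    (hW : ∀ᶠ i in l, (W i : ℝ) = α * N i) :
    Tendsto (fun i => Real.log ((N i).choose (W i)) / N i) l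
      (nhds (-(α * Real.log α) - (1 - α) * Real.log (1 - α))) := by
  have hle : ∀ᶠ i in l, W i ≤ N i := by
    filter_upwards [hW] with i hi
    have : (W i : ℝ) ≤ N i := hi ▸ mul_le_of_le_one_left (Nat.cast_nonneg _) hα1.le
    exact_mod_cast this
  have hsub : ∀ᶠ i in l, ((N i - W i : ℕ) : ℝ) = (1 - α) * N i := by
    filter_upwards [hW, hle] with i hi hi'
    rw [Nat.cast_sub hi', hi]
    ring
  have hNr : Tendsto (fun i => (N i : ℝ)) l atTop := tendsto_natCast_atTop_atTop.comp hN
  have hWt : Tendsto W l atTop := by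
    rw [← tendsto_natCast_atTop_iff (R := ℝ)]
    exact (hNr.const_mul_atTop hα0).congr' (hW.mono fun i hi => hi.symm)
  have hSt : Tendsto (fun i => N i - W i) l atTop := by
    rw [← tendsto_natCast_atTop_iff (R := ℝ)]
    exact (hNr.const_mul_atTop (sub_pos.mpr hα1)).congr' (hsub.mono fun i hi => hi.symm)
  have hr := tendsto_log_factorial_sub_div
  have hlim := (((hr.comp hN).sub ((hr.comp hWt).const_mul α)).sub
    ((hr.comp hSt).const_mul (1 - α))).add_const
      (-(α * Real.log α) - (1 - α) * Real.log (1 - α))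
  rw [mul_zero, mul_zero, sub_zero, sub_zero, zero_add] at hlim
  refine hlim.congr' ?_
  filter_upwards [hW, hle, hsub, hN.eventually_gt_atTop 0] with i hi hi' hs hN0
  have hN0' : (0 : ℝ) < N i := by exact_mod_cast hN0
  have hα1' : 0 < 1 - α := sub_pos.mpr hα1
  simp only [Function.comp_apply]
  rw [Nat.cast_choose ℝ hi', Real.log_div (by positivity) (by positivity),
    Real.log_mul (by positivity) (by positivity), hs, hi, Real.log_mul hα0.ne' hN0'.ne',
    Real.log_mul hα1'.ne' hN0'.ne']
  field_simp
  ring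

/-- for `j, k ≥ 2`, `d = k` for even `k` and `d = k - 1` for odd
`k`, and `0 < α < d/k`, the growth rate of the weight distribution of the
`(j,k)`-regular configuration-model LDPC ensemble equals
`G_1(α) = (j/k) log[((1+x₀)^k + (1-x₀)^k)/2] - j α log x₀ - (j-1) h(α)`,
where `x₀` is the (unique) positive solution of
`α[(1+x₀)^k + (1-x₀)^k] = x₀[(1+x₀)^{k-1} - (1-x₀)^{k-1}]`. -/
theorem stmt_15 (j k : ℕ) (hj : 2 ≤ j) (hk : 2 ≤ k) (d : ℕ)
    (hd : d = if Even k then k else k - 1)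
    (α : ℝ) (h0 : 0 < α) (h1 : α < (d : ℝ) / (k : ℝ))
    (x0 : ℝ) (hx0pos : 0 < x0)
    (hx0eq : α * ((1 + x0) ^ k + (1 - x0) ^ k) =
      x0 * ((1 + x0) ^ (k - 1) - (1 - x0) ^ (k - 1))) :
    Filter.Tendsto
      (fun n : ℕ => (1 / n : ℝ) * Real.log (expectWeight n j k α))
      (Filter.atTop ⊓ Filter.principal
        {n : ℕ | 0 < n ∧ k ∣ n * j ∧ (∃ w : ℕ, (w : ℝ) = α * (n : ℝ)) ∧
          0 < expectWeight n j k α})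
      (nhds (((j : ℝ) / (k : ℝ)) * Real.log (((1 + x0) ^ k + (1 - x0) ^ k) / 2) -
        (j : ℝ) * α * Real.log x0 -
        ((j : ℝ) - 1) * (-(α * Real.log α) - (1 - α) * Real.log (1 - α)))) := by
  have hk0 : 0 < k := by omega
  have hj0 : 0 < j := by omega
  have hkr : (0 : ℝ) < k := by exact_mod_cast hk0
  have hjr : (0 : ℝ) < j := by exact_mod_cast hj0
  have hdk : d ≤ k := by split_ifs at hd <;> omega
  have hdeven : Even d := by
    split_ifs at hd with h
    · rwa [hd]
    · rw [hd]
      exact (Nat.not_even_iff_odd.mp h).tsub_odd odd_one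
  have hμd : k * α < d := by rw [lt_div_iff₀ hkr] at h1; linarith
  have hα1 : α < 1 := by
    have : (d : ℝ) ≤ k := by exact_mod_cast hdk
    nlinarith
  have hf : 0 < (evenWeightEnumerator k).eval x0 := by
    refine lt_of_lt_of_le one_pos ?_
    have := Polynomial.coeff_mul_pow_le_eval (P := evenWeightEnumerator k)
      (by simpa using coeff_pow_evenWeightEnumerator_nonneg k 1) hx0pos.le 0
    rw [pow_zero, mul_one] at this
    exact (one_le_coeff_evenWeightEnumerator Even.zero (Nat.zero_le k)).trans this
  have hcrit : x0 * (evenWeightEnumerator k).derivative.eval x0 =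
      (k * α) * (evenWeightEnumerator k).eval x0 := by
    rw [eval_derivative_evenWeightEnumerator, eval_evenWeightEnumerator]
    linear_combination (-(k : ℝ) / 2) * hx0eq
  let l : Filter ℕ := Filter.atTop ⊓ Filter.principal
        {n : ℕ | 0 < n ∧ k ∣ n * j ∧ (∃ w : ℕ, (w : ℝ) = α * (n : ℝ)) ∧
          0 < expectWeight n j k α}
  have hmem : ∀ᶠ n in l, 0 < n ∧ k ∣ n * j ∧ (∃ w : ℕ, (w : ℝ) = α * (n : ℝ)) ∧
      0 < expectWeight n j k α := Filter.mem_inf_of_right (Filter.mem_principal_self _)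
  have hid : Filter.Tendsto (fun n : ℕ => n) l Filter.atTop :=
    Filter.tendsto_inf_left Filter.tendsto_id
  have hw : ∀ᶠ n : ℕ in l, ((⌊α * n⌋₊ : ℕ) : ℝ) = α * n := by
    filter_upwards [hmem] with n hn
    obtain ⟨w, hw⟩ := hn.2.2.1
    rw [← hw, Nat.floor_natCast]
  have hm : ∀ᶠ n : ℕ in l, ((n * j / k : ℕ) : ℝ) = n * (j / k) := by
    filter_upwards [hmem] with n hn
    rw [Nat.cast_div hn.2.1 hkr.ne']
    push_cast
    ring
  have hmt : Filter.Tendsto (fun n : ℕ => n * j / k) l Filter.atTop := by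
    rw [← tendsto_natCast_atTop_iff (R := ℝ)]
    exact ((tendsto_natCast_atTop_atTop.comp hid).atTop_mul_const (div_pos hjr hkr)).congr'
      (hm.mono fun n hn => hn.symm)
  have hexp : ∀ᶠ n : ℕ in l, expectWeight n j k α = n.choose ⌊α * n⌋₊ *
      ((evenWeightEnumerator k) ^ (n * j / k)).coeff (j * ⌊α * n⌋₊) /
        (n * j).choose (j * ⌊α * n⌋₊) := by
    filter_upwards [hmem, hw] with n hn hwn
    refine expectWeight_eq hk0 hn.2.1 hwn ?_
    have : ((⌊α * n⌋₊ : ℕ) : ℝ) ≤ n :=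
      hwn.trans_le (mul_le_of_le_one_left (Nat.cast_nonneg n) hα1.le)
    exact_mod_cast this
  have hne : ∀ᶠ n : ℕ in l,
      ((evenWeightEnumerator k) ^ (n * j / k)).coeff (j * ⌊α * n⌋₊) ≠ 0 := by
    filter_upwards [hmem, hexp] with n hn he h
    rw [h, mul_zero, zero_div] at he
    exact hn.2.2.2.ne' he
  have lim1 := tendsto_log_choose_div (W := fun n : ℕ => ⌊α * n⌋₊) hid h0 hα1 hw
  have lim2 := tendsto_log_choose_div (N := fun n : ℕ => n * j) (W := fun n : ℕ => j * ⌊α * n⌋₊)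
    (hid.atTop_mul_const' hj0) h0 hα1 (by
      filter_upwards [hw] with n hn
      push_cast
      rw [hn]
      ring)
  have lim3 := tendsto_log_coeff_pow_evenWeightEnumerator hdeven hdk hx0pos hf hcrit
    (mul_pos hkr h0) hμd (m := fun n => n * j / k) (t := fun n : ℕ => j * ⌊α * n⌋₊) hmt (by
      filter_upwards [hw, hm] with n hn hmn
      rw [hmn]
      push_cast
      rw [hn]
      field_simp) hne
  have lim := (lim1.add (lim3.const_mul (j / k : ℝ))).sub (lim2.const_mul (j : ℝ))
  rw [eval_evenWeightEnumerator] at lim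
  convert lim.congr' ?_ using 2
  · field_simp
    ring
  · filter_upwards [hmem, hexp, hne, hm] with n hn he hcoeff hmn
    have hn0 : (0 : ℝ) < n := by exact_mod_cast hn.1
    have hpos := hn.2.2.2
    rw [he] at hpos ⊢
    have hC1 : (n.choose ⌊α * n⌋₊ : ℝ) ≠ 0 := by
      intro h
      simp [h] at hpos
    have hC2 : ((n * j).choose (j * ⌊α * n⌋₊) : ℝ) ≠ 0 := by
      intro h
      simp [h] at hpos
    rw [Real.log_div (mul_ne_zero hC1 hcoeff) hC2, Real.log_mul hC1 hcoeff, hmn]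
    push_cast
    field_simp
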